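/- arXiv:1809.04382 — 5 statements merged into one kernel-verified Lean document; each statement's English description precedes it below -/
import Mathlib

section
/- Each of the Max rules R^m_{|B_v|}, R^m_{c(B_v)}, and R^m_{1_{|B_v|>0}} satisfies Budget Monotonicity: for every budgeting scenario E = (A, V, c, ℓ) and every pair of feasible budgets B, B' with B ⊂ B', if B is winning under the rule then B' is also winning under that rule. -/
/-!
All three satisfaction functions are monotone in the budget (`fCard_monotone`, `fCost_monotone`,
`fCover_monotone`; costs are natural numbers, hence nonnegative). So enlarging a winning budget
does not lower its total satisfaction, which was already greatest among feasible budgets; a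
feasible superset therefore also attains the maximum (`winning_of_subset`).
-/

open Finset

/-- A budget `B` is feasible in scenario `(A, c, ℓ)` if it consists of available items
and its total cost is within the budget limit. -/
def feasible {ι : Type*} (A : Finset ι) (c : ι → ℕ) (ℓ : ℕ) (B : Finset ι) : Prop :=
  B ⊆ A ∧ ∑ a ∈ B, c a ≤ ℓ

/-- Total satisfaction of the voters `V` (with approval sets `appr`) from budget `B`,
under satisfaction function `f`. -/
def totalSat {ι υ : Type*} (V : Finset υ) (appr : υ → Finset ι)
    (f : Finset ι → Finset ι → ℕ) (B : Finset ι) : ℕ :=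
  ∑ v ∈ V, f (appr v) B

/-- `B` is a winning budget under the Max rule `R^m_f`. -/
def winning {ι υ : Type*} (A : Finset ι) (V : Finset υ) (appr : υ → Finset ι)
    (c : ι → ℕ) (ℓ : ℕ) (f : Finset ι → Finset ι → ℕ) (B : Finset ι) : Prop :=
  feasible A c ℓ B ∧
    ∀ B' : Finset ι, feasible A c ℓ B' → totalSat V appr f B' ≤ totalSat V appr f B

/-- Cardinality satisfaction: `f(A_v, B) = |A_v ∩ B|`. -/
def fCard {ι : Type*} [DecidableEq ι] : Finset ι → Finset ι → ℕ :=
  fun Av B => (Av ∩ B).card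

/-- Cost satisfaction: `f(A_v, B) = c(A_v ∩ B)`. -/
def fCost {ι : Type*} [DecidableEq ι] (c : ι → ℕ) : Finset ι → Finset ι → ℕ :=
  fun Av B => ∑ a ∈ Av ∩ B, c a

/-- Coverage satisfaction: `f(A_v, B) = 1` if `A_v ∩ B ≠ ∅`, else `0`. -/
def fCover {ι : Type*} [DecidableEq ι] : Finset ι → Finset ι → ℕ :=
  fun Av B => if (Av ∩ B).Nonempty then 1 else 0


/-- Budget Monotonicity for any satisfaction function that is monotone in the budget. -/
theorem winning_of_subset {ι υ : Type*} {A : Finset ι} {V : Finset υ} {appr : υ → Finset ι}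
    {c : ι → ℕ} {ℓ : ℕ} {f : Finset ι → Finset ι → ℕ} (hf : ∀ S, Monotone (f S))
    {B B' : Finset ι} (hB' : feasible A c ℓ B') (hsub : B ⊆ B')
    (h : winning A V appr c ℓ f B) : winning A V appr c ℓ f B' :=
  ⟨hB', fun C hC => (h.2 C hC).trans (Finset.sum_le_sum fun v _ => hf (appr v) hsub)⟩

theorem fCard_monotone {ι : Type*} [DecidableEq ι] (S : Finset ι) : Monotone (fCard S) :=
  fun _ _ h => Finset.card_le_card (Finset.inter_subset_inter_left h)

theorem fCost_monotone {ι : Type*} [DecidableEq ι] (c : ι → ℕ) (S : Finset ι) :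
    Monotone (fCost c S) :=
  fun _ _ h => Finset.sum_le_sum_of_subset (Finset.inter_subset_inter_left h)

theorem fCover_monotone {ι : Type*} [DecidableEq ι] (S : Finset ι) : Monotone (fCover S) := by
  intro B B' h
  by_cases hB : (S ∩ B).Nonempty
  · have hB' : (S ∩ B').Nonempty := hB.mono (Finset.inter_subset_inter_left h)
    simp [fCover, hB, hB']
  · simp [fCover, hB]

/-- The Max rules `R^m_{|B_v|}`, `R^m_{c(B_v)}` and `R^m_{1_{|B_v|>0}}`
all satisfy Budget Monotonicity. -/
theorem maxRules_budgetMonotone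
    {ι υ : Type*} [DecidableEq ι]
    (A : Finset ι) (V : Finset υ) (appr : υ → Finset ι) (c : ι → ℕ) (ℓ : ℕ)
    (happr : ∀ v ∈ V, appr v ⊆ A)
    (B B' : Finset ι) (hB : feasible A c ℓ B) (hB' : feasible A c ℓ B')
    (hss : B ⊂ B') :
    (winning A V appr c ℓ fCard B → winning A V appr c ℓ fCard B') ∧
    (winning A V appr c ℓ (fCost c) B → winning A V appr c ℓ (fCost c) B') ∧
    (winning A V appr c ℓ fCover B → winning A V appr c ℓ fCover B') := by
  exact ⟨winning_of_subset fCard_monotone hB' hss.subset,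
    winning_of_subset (fCost_monotone c) hB' hss.subset,
    winning_of_subset fCover_monotone hB' hss.subset⟩
end

section
/- The Max rule R^m_{|B_v|} satisfies Discount Monotonicity: for every budgeting scenario E = (A, V, c, ℓ), every budget B that is winning under R^m_{|B_v|} in E, and every item b ∈ B with c(b) ≥ 1, in the modified scenario E' = (A, V, c', ℓ) where c'(b) = c(b) − 1 and c'(a) = c(a) for all a ≠ b, there exists a budget that is winning under R^m_{|B_v|} in E' and contains b. -/
/-!
Some budget `M` is winning after the discount, since there are finitely many feasible ones.
If `b ∈ M` there is nothing to show. Otherwise the cost of `M` is the same before and after the discount, so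
`M` was already feasible and the old winner `B` is at least as good as `M`. As `B` only became
cheaper, it is still feasible, hence winning, and it contains `b`.
-/

open Finset

/-- `R^m_{|B_v|}` satisfies Discount Monotonicity: if `b` belongs to a
winning budget and its cost is decreased by one (all else unchanged), then some
winning budget of the modified scenario contains `b`. -/
theorem card_maxRule_discountMonotone
    {ι υ : Type*} [DecidableEq ι]
    (A : Finset ι) (V : Finset υ) (appr : υ → Finset ι) (c : ι → ℕ) (ℓ : ℕ)
    (happr : ∀ v ∈ V, appr v ⊆ A)
    (B : Finset ι) (b : ι) (hb : b ∈ B) (hcb : 1 ≤ c b)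
    (hwin : winning A V appr c ℓ fCard B) :
    ∃ B' : Finset ι,
      winning A V appr (Function.update c b (c b - 1)) ℓ fCard B' ∧ b ∈ B' := by
  set c' := Function.update c b (c b - 1) with hc'
  have hle : ∀ a, c' a ≤ c a := by
    intro a
    by_cases h : a = b
    · subst h; simp [hc']
    · simp [hc', h]
  obtain ⟨⟨hBA, hBc⟩, hBmax⟩ := hwin
  have hBfeas : feasible A c' ℓ B :=
    ⟨hBA, (Finset.sum_le_sum fun a _ => hle a).trans hBc⟩
  classical
  obtain ⟨M, hM, hMmax⟩ := Finset.exists_max_image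
    (A.powerset.filter fun X => feasible A c' ℓ X) (totalSat V appr fCard)
    ⟨B, by simp [hBA, hBfeas]⟩
  have hMfeas : feasible A c' ℓ M := (Finset.mem_filter.mp hM).2
  have hMmax' : ∀ X, feasible A c' ℓ X → totalSat V appr fCard X ≤ totalSat V appr fCard M :=
    fun X hX => hMmax X (Finset.mem_filter.mpr ⟨Finset.mem_powerset.mpr hX.1, hX⟩)
  by_cases hbM : b ∈ M
  · exact ⟨M, ⟨hMfeas, hMmax'⟩, hbM⟩
  · have hsum : ∑ a ∈ M, c' a = ∑ a ∈ M, c a :=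
      Finset.sum_congr rfl fun a ha => by
        have : a ≠ b := fun h => hbM (h ▸ ha)
        simp [hc', this]
    have hMB := hBmax M ⟨hMfeas.1, hsum ▸ hMfeas.2⟩
    exact ⟨B, ⟨hBfeas, fun X hX => (hMmax' X hX).trans hMB⟩, hb⟩
end

section
/- The Max rule R^m_{1_{|B_v|>0}} satisfies Discount Monotonicity: for every budgeting scenario E = (A, V, c, ℓ), every budget B that is winning under R^m_{1_{|B_v|>0}} in E, and every item b ∈ B with c(b) ≥ 1, in the modified scenario E' = (A, V, c', ℓ) where c'(b) = c(b) − 1 and c'(a) = c(a) for all a ≠ b, there exists a budget that is winning under R^m_{1_{|B_v|>0}} in E' and contains b. -/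
/-!
Discounting `b` leaves the cost of every budget without `b` unchanged and does not raise the cost
of any other. Hence `B` stays feasible, and a best feasible budget `W` among those containing `b`
is at least as good as `B`. A feasible budget of the discounted scenario that omits `b` was already
feasible before, so it is no better than `B`, hence no better than `W`. Thus `W` is winning.
The one property of coverage satisfaction that matters here is that it does not depend on costs.
-/

open Finset

/-- `R^m_{1_{|B_v|>0}}` satisfies Discount Monotonicity: if `b` belongs to a
winning budget and its cost is decreased by one (all else unchanged), then some
winning budget of the modified scenario contains `b`. -/
theorem cover_maxRule_discountMonotone
    {ι υ : Type*} [DecidableEq ι]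
    (A : Finset ι) (V : Finset υ) (appr : υ → Finset ι) (c : ι → ℕ) (ℓ : ℕ)
    (happr : ∀ v ∈ V, appr v ⊆ A)
    (B : Finset ι) (b : ι) (hb : b ∈ B) (hcb : 1 ≤ c b)
    (hwin : winning A V appr c ℓ fCover B) :
    ∃ B' : Finset ι,
      winning A V appr (Function.update c b (c b - 1)) ℓ fCover B' ∧ b ∈ B' := by
  classical
  obtain ⟨⟨hBA, hBc⟩, hmax⟩ := hwin
  set c' := Function.update c b (c b - 1) with hc'
  have hle : ∀ a, c' a ≤ c a := by
    intro a
    by_cases h : a = b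
    · subst h; simp [hc']
    · simp [hc', h]
  have hB' : feasible A c' ℓ B := ⟨hBA, (sum_le_sum fun a _ => hle a).trans hBc⟩
  obtain ⟨W, hW, hWmax⟩ := exists_max_image
    (A.powerset.filter fun S => feasible A c' ℓ S ∧ b ∈ S) (totalSat V appr fCover)
    ⟨B, by simp [hBA, hB', hb]⟩
  simp only [mem_filter, mem_powerset] at hW hWmax
  refine ⟨W, ⟨hW.2.1, fun S hS => ?_⟩, hW.2.2⟩
  by_cases hbS : b ∈ S
  · exact hWmax S ⟨hS.1, hS, hbS⟩
  · have hsum : ∑ a ∈ S, c' a = ∑ a ∈ S, c a := sum_congr rfl fun a ha =>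
      Function.update_of_ne (ne_of_mem_of_not_mem ha hbS) _ _
    exact (hmax S ⟨hS.1, hsum ▸ hS.2⟩).trans (hWmax B ⟨hBA, hB', hb⟩)
end

section
/- The Max rule R^m_{|B_v|} satisfies Splitting Monotonicity: for every budgeting scenario E = (A, V, c, ℓ), every item a that belongs to some winning budget of E under R^m_{|B_v|}, and every scenario E' obtained from E by splitting a into a nonempty set A' of new items, some winning budget of E' under R^m_{|B_v|} contains at least one item of A'. -/
/-!
Let `B` be a winning budget containing `a`, and let `B₁ = (B \ {a}) ∪ A'`. Then `B₁` costs as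
much as `B`, and no voter is less satisfied by `B₁` after the split than by `B` before it, because
`A'` is nonempty. Take any winning budget `W` of the new scenario. If `W` meets `A'`, it is the
required budget. Otherwise `W` consists of old items other than `a`, so it is feasible in the
original scenario with the same satisfaction, which is at most that of `B` and hence at most that
of `B₁`; so `B₁`, which contains `A'`, is winning as well.
-/

open Finset

theorem exists_winning {ι υ : Type*} (A : Finset ι) (V : Finset υ) (appr : υ → Finset ι)
    (c : ι → ℕ) (ℓ : ℕ) (f : Finset ι → Finset ι → ℕ) :
    ∃ B : Finset ι, winning A V appr c ℓ f B := by
  classical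
  obtain ⟨B, hB, hmax⟩ := Finset.exists_max_image
    (A.powerset.filter fun B => ∑ a ∈ B, c a ≤ ℓ) (totalSat V appr f)
    ⟨∅, by simp⟩
  simp only [Finset.mem_filter, Finset.mem_powerset] at hB hmax
  exact ⟨B, hB, hmax⟩

/-- `R^m_{|B_v|}` satisfies Splitting Monotonicity: if item `a` belongs to
some winning budget and `a` is split into a nonempty set `A'` of new items (total cost
`c a`, approved exactly by the voters who approved `a`), then some winning budget of
the new scenario contains at least one item of `A'`. -/
theorem card_maxRule_splittingMonotone
    {ι υ : Type*} [DecidableEq ι]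
    (A : Finset ι) (V : Finset υ) (appr : υ → Finset ι) (c : ι → ℕ) (ℓ : ℕ)
    (happr : ∀ v ∈ V, appr v ⊆ A)
    (a : ι) (ha : a ∈ A)
    (A' : Finset ι) (hA'ne : A'.Nonempty) (hdisj : Disjoint A' (A.erase a))
    (c' : ι → ℕ) (hc'old : ∀ x ∈ A.erase a, c' x = c x) (hc'sum : ∑ x ∈ A', c' x = c a)
    (appr' : υ → Finset ι)
    (happr'yes : ∀ v, a ∈ appr v → appr' v = (appr v).erase a ∪ A')
    (happr'no : ∀ v, a ∉ appr v → appr' v = appr v)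
    (hwinE : ∃ B : Finset ι, winning A V appr c ℓ fCard B ∧ a ∈ B) :
    ∃ B' : Finset ι,
      winning (A.erase a ∪ A') V appr' c' ℓ fCard B' ∧ (B' ∩ A').Nonempty := by
  obtain ⟨B, ⟨⟨hBA, hBc⟩, hBmax⟩, haB⟩ := hwinE
  have hB₁dis : Disjoint (B.erase a) A' :=
    (hdisj.mono_right (Finset.erase_subset_erase a hBA)).symm
  -- Replacing `a` by all of its parts keeps the cost.
  have hB₁feas : feasible (A.erase a ∪ A') c' ℓ (B.erase a ∪ A') := by
    refine ⟨Finset.union_subset_union_left (Finset.erase_subset_erase a hBA), ?_⟩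
    rw [Finset.sum_union hB₁dis, hc'sum,
      Finset.sum_congr rfl fun x hx => hc'old x (Finset.erase_subset_erase a hBA hx),
      Finset.sum_erase_add _ _ haB]
    exact hBc
  -- It does not lower any voter's satisfaction, since `a` maps to at least one part.
  have hB₁sat : totalSat V appr fCard B ≤ totalSat V appr' fCard (B.erase a ∪ A') := by
    refine Finset.sum_le_sum fun v hv => ?_
    simp only [fCard]
    by_cases hav : a ∈ appr v
    · rw [happr'yes v hav]
      have hsub : (appr v ∩ B).erase a ∪ A' ⊆
          ((appr v).erase a ∪ A') ∩ (B.erase a ∪ A') := by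
        intro x hx
        simp only [Finset.mem_union, Finset.mem_inter, Finset.mem_erase] at hx ⊢
        tauto
      have hdis : Disjoint ((appr v ∩ B).erase a) A' :=
        hB₁dis.mono_left (Finset.erase_subset_erase a Finset.inter_subset_right)
      have hcard := Finset.card_le_card hsub
      rw [Finset.card_union_of_disjoint hdis] at hcard
      have herase := Finset.card_erase_add_one (Finset.mem_inter.mpr ⟨hav, haB⟩)
      have hpos := hA'ne.card_pos
      omega
    · rw [happr'no v hav]
      refine Finset.card_le_card fun x hx => ?_
      rw [Finset.mem_inter] at hx ⊢
      refine ⟨hx.1, Finset.mem_union_left _ (Finset.mem_erase.mpr ⟨?_, hx.2⟩)⟩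
      rintro rfl
      exact hav hx.1
  obtain ⟨W, hW, hWmax⟩ := exists_winning (A.erase a ∪ A') V appr' c' ℓ fCard
  by_cases hWA' : (W ∩ A').Nonempty
  · exact ⟨W, ⟨hW, hWmax⟩, hWA'⟩
  have hWdis : ∀ x ∈ W, x ∉ A' := fun x hx hx' =>
    hWA' ⟨x, Finset.mem_inter.mpr ⟨hx, hx'⟩⟩
  have hWA : W ⊆ A.erase a := fun x hx =>
    (Finset.mem_union.mp (hW.1 hx)).resolve_right (hWdis x hx)
  -- A budget avoiding `A'` also avoids `a`, so it is feasible in the original scenario ...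
  have hWfeas : feasible A c ℓ W := by
    refine ⟨hWA.trans (Finset.erase_subset a A), ?_⟩
    rw [← Finset.sum_congr rfl fun x hx => hc'old x (hWA hx)]
    exact hW.2
  -- ... with the same satisfaction.
  have hWsat : totalSat V appr' fCard W = totalSat V appr fCard W := by
    refine Finset.sum_congr rfl fun v _ => ?_
    simp only [fCard]
    by_cases hav : a ∈ appr v
    · rw [happr'yes v hav]
      congr 1
      ext x
      have hxA' := hWdis x
      have hxa : x ∈ W → x ≠ a := fun hx => Finset.ne_of_mem_erase (hWA hx)
      simp only [Finset.mem_union, Finset.mem_inter, Finset.mem_erase]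
      tauto
    · rw [happr'no v hav]
  refine ⟨B.erase a ∪ A', ⟨hB₁feas, fun C hC => ?_⟩, ?_⟩
  · calc totalSat V appr' fCard C ≤ totalSat V appr' fCard W := hWmax C hC
      _ = totalSat V appr fCard W := hWsat
      _ ≤ totalSat V appr fCard B := hBmax W hWfeas
      _ ≤ _ := hB₁sat
  · obtain ⟨x, hx⟩ := hA'ne
    exact ⟨x, Finset.mem_inter.mpr ⟨Finset.mem_union_right _ hx, hx⟩⟩
end

section
/- The Max rule R^m_{c(B_v)} satisfies Merging Monotonicity: for every budgeting scenario E = (A, V, c, ℓ), every winning budget B of E under R^m_{c(B_v)}, and every set A' ⊆ B such that each voter approves either all items of A' or none of them, in the scenario E' obtained from E by merging A' into a single new item a, some winning budget of E' under R^m_{c(B_v)} (with satisfaction computed using the cost function c' of E') contains a. -/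
/-!
Un-merging sends a budget `D` of the merged scenario to the budget of the original one in which
`x` (if present) is replaced by the items of `A'`. Since `c' x` is the total cost of `A'` and the
voters approving `x` are those approving all of `A'`, un-merging preserves both the total cost
(`sum_insert_merged`) and the satisfaction of every voter (`fCost_insert_merged`,
`fCost_unmerged`). The winning budget `B ⊇ A'` is the un-merging of `insert x (B \ A')`, so this
budget is feasible and no feasible budget of the merged scenario beats it.
-/

open Finset

/-- Replacing the items of `A'` by the merged item `x` does not change the cost. -/
theorem sum_insert_merged {ι : Type*} [DecidableEq ι] {A A' S : Finset ι} {c c' : ι → ℕ} {x : ι}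
    (hx : x ∉ A) (hold : ∀ y ∈ A \ A', c' y = c y) (hcx : c' x = ∑ y ∈ A', c y)
    (hS : S ⊆ A \ A') : ∑ y ∈ insert x S, c' y = ∑ y ∈ S ∪ A', c y := by
  have hxS : x ∉ S := fun h => hx (mem_sdiff.1 (hS h)).1
  have hdisj : Disjoint S A' := disjoint_of_subset_left hS sdiff_disjoint
  rw [sum_insert hxS, sum_union hdisj, hcx, sum_congr rfl fun y hy => hold y (hS hy), add_comm]

/-- A voter is as satisfied by a budget containing the merged item `x` as by the original budget
containing `A'` in its place. -/
theorem fCost_insert_merged {ι : Type*} [DecidableEq ι] {A A' S P P' : Finset ι} {c c' : ι → ℕ}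
    {x : ι} (hx : x ∉ A) (hold : ∀ y ∈ A \ A', c' y = c y) (hcx : c' x = ∑ y ∈ A', c y)
    (hP : P ⊆ A) (hP' : (A' ⊆ P ∧ P' = (P \ A') ∪ {x}) ∨ (Disjoint P A' ∧ P' = P))
    (hS : S ⊆ A \ A') : fCost c' P' (insert x S) = fCost c P (S ∪ A') := by
  have hPS : P ∩ S ⊆ A \ A' := inter_subset_right.trans hS
  unfold fCost
  rcases hP' with ⟨hsub, rfl⟩ | ⟨hdisj, rfl⟩
  · have h1 : (P \ A' ∪ {x}) ∩ insert x S = insert x (P ∩ S) := by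
      ext y
      have := @hS y
      simp only [mem_inter, mem_union, mem_sdiff, mem_singleton, mem_insert] at *
      tauto
    rw [h1, sum_insert_merged hx hold hcx hPS, inter_union_distrib_left,
      inter_eq_right.2 hsub]
  · rw [inter_insert_of_notMem fun h => hx (hP h), inter_union_distrib_left,
      disjoint_iff_inter_eq_empty.1 hdisj, union_empty]
    exact sum_congr rfl fun y hy => hold y (hPS hy)

/-- Merging does not affect a voter's satisfaction with a budget that avoids both `A'` and the
merged item `x`. -/
theorem fCost_unmerged {ι : Type*} [DecidableEq ι] {A A' S P P' : Finset ι} {c c' : ι → ℕ}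
    {x : ι} (hx : x ∉ A) (hold : ∀ y ∈ A \ A', c' y = c y)
    (hP' : (A' ⊆ P ∧ P' = (P \ A') ∪ {x}) ∨ (Disjoint P A' ∧ P' = P))
    (hS : S ⊆ A \ A') : fCost c' P' S = fCost c P S := by
  have h1 : P' ∩ S = P ∩ S := by
    rcases hP' with ⟨-, rfl⟩ | ⟨-, rfl⟩
    · ext y
      have := @hS y
      have hxy : y = x → y ∉ A := fun h => h ▸ hx
      simp only [mem_inter, mem_union, mem_sdiff, mem_singleton] at *
      tauto
    · rfl
  unfold fCost
  rw [h1]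
  exact sum_congr rfl fun y hy => hold y (hS (inter_subset_right hy))

/-- `R^m_{c(B_v)}` satisfies Merging Monotonicity: if `A'` is a subset of a
winning budget such that each voter approves all of `A'` or none of it, and `A'` is
merged into a single fresh item `x` (of cost `c(A')`, approved exactly by the voters
who approved all of `A'`), then some winning budget of the merged scenario contains `x`. -/
theorem cost_maxRule_mergingMonotone
    {ι υ : Type*} [DecidableEq ι]
    (A : Finset ι) (V : Finset υ) (appr : υ → Finset ι) (c : ι → ℕ) (ℓ : ℕ)
    (happr : ∀ v ∈ V, appr v ⊆ A)
    (B : Finset ι) (hwin : winning A V appr c ℓ (fCost c) B)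
    (A' : Finset ι) (hA'B : A' ⊆ B)
    (x : ι) (hx : x ∉ A)
    (c' : ι → ℕ) (hc'old : ∀ y ∈ A \ A', c' y = c y) (hc'x : c' x = ∑ y ∈ A', c y)
    (appr' : υ → Finset ι)
    (happr' : ∀ v,
      (A' ⊆ appr v ∧ appr' v = (appr v \ A') ∪ {x}) ∨
      (Disjoint (appr v) A' ∧ appr' v = appr v)) :
    ∃ B' : Finset ι,
      winning ((A \ A') ∪ {x}) V appr' c' ℓ (fCost c') B' ∧ x ∈ B' := by
  obtain ⟨⟨hBA, hBℓ⟩, hmax⟩ := hwin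
  have hS₀ : B \ A' ⊆ A \ A' := sdiff_subset_sdiff hBA subset_rfl
  have hA'A : A' ⊆ A := hA'B.trans hBA
  have hB : B \ A' ∪ A' = B := sdiff_union_of_subset hA'B
  have hsat : ∀ S ⊆ A \ A', totalSat V appr' (fCost c') (insert x S) =
      totalSat V appr (fCost c) (S ∪ A') := fun S hS =>
    sum_congr rfl fun v hv =>
      fCost_insert_merged hx hc'old hc'x (happr v hv) (happr' v) hS
  refine ⟨insert x (B \ A'), ⟨⟨?_, ?_⟩, fun D hD => ?_⟩, mem_insert_self _ _⟩
  · rw [union_comm, ← insert_eq]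
    exact insert_subset_insert x hS₀
  · rwa [sum_insert_merged hx hc'old hc'x hS₀, hB]
  · obtain ⟨hDA, hDℓ⟩ := hD
    rw [union_comm, ← insert_eq] at hDA
    rw [hsat _ hS₀, hB]
    by_cases hxD : x ∈ D
    · have hS : D.erase x ⊆ A \ A' := subset_insert_iff.1 hDA
      rw [← insert_erase hxD, sum_insert_merged hx hc'old hc'x hS] at hDℓ
      rw [← insert_erase hxD, hsat _ hS]
      exact hmax _ ⟨union_subset (hS.trans sdiff_subset) hA'A, hDℓ⟩
    · have hS : D ⊆ A \ A' := (subset_insert_iff_of_notMem hxD).1 hDA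
      rw [sum_congr rfl fun y hy => hc'old y (hS hy)] at hDℓ
      have h : totalSat V appr' (fCost c') D = totalSat V appr (fCost c) D :=
        sum_congr rfl fun v _ => fCost_unmerged hx hc'old (happr' v) hS
      rw [h]
      exact hmax _ ⟨hS.trans sdiff_subset, hDℓ⟩
end
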